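/- There exists κ = κ(n) > 0 such that every complete rotationally symmetric Riemannian (n+1)-manifold (M, g) not diffeomorphic to S¹ × S^n is κ-noncollapsed on all scales: whenever x₀ ∈ M and r > 0 satisfy |Rm| ≤ r⁻² on B(x₀, r), one has Vol(B(x₀, r)) ≥ κ r^{n+1}. -/

import Mathlib

open Set Filter MeasureTheory Metric

/-!
Only the curvature `(1 - ψ'²) / ψ²` of the planes tangent to the orbits matters. Its lower bound
gives `|ψ'| ≤ 1 + ψ / r`, so `log (r + ψ)` is `1 / r`-Lipschitz and `r + ψ` is comparable to
`N = r + ψ r₀` on the interval of radius `r / 10` about `r₀`. If `ψ r₀ ≥ r / 4`, this gives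
`ψ ≥ N / 10` there. If `ψ r₀ ≤ r / 4`, then `ψ ≤ r / 2` there and the upper curvature bound forces
`|ψ'| ≥ 1 / 2`, so `ψ` grows at a linear rate in one of the two directions. Since `ψ` tends to zero
at a finite end of the manifold, a direction in which `ψ` stays bounded below cannot leave the
manifold, which yields an interval of length `r / 20` on which `ψ ≥ N / 50`. Its product with a
spherical cap of radius `r / (16 N)` lies in the geodesic ball, and its volume is at least a
constant times `(N / 50)ⁿ * (r / 20) * (r / (16 N))ⁿ`, in which `N` cancels.
-/

open scoped Topology Pointwise

section RealFunctions

variable {s : Set ℝ} {f : ℝ → ℝ}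

lemma exp_neg_mul_abs_sub_mul_le_of_abs_deriv_le_mul {L x y : ℝ} (hs : Convex ℝ s)
    (hf : ∀ z ∈ s, DifferentiableAt ℝ f z) (hpos : ∀ z ∈ s, 0 < f z)
    (hderiv : ∀ z ∈ s, |deriv f z| ≤ L * f z) (hx : x ∈ s) (hy : y ∈ s) :
    Real.exp (-(L * |y - x|)) * f y ≤ f x := by
  have hlog : ∀ z ∈ s,
      HasDerivWithinAt (fun w ↦ Real.log (f w)) (deriv f z / f z) s z := fun z hz ↦
    ((hf z hz).hasDerivAt.log (hpos z hz).ne').hasDerivWithinAt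
  have hbound : ∀ z ∈ s, ‖deriv f z / f z‖ ≤ L := fun z hz ↦ by
    rw [Real.norm_eq_abs, abs_div, abs_of_pos (hpos z hz), div_le_iff₀ (hpos z hz)]
    exact hderiv z hz
  have hlip : |Real.log (f y) - Real.log (f x)| ≤ L * |y - x| :=
    hs.norm_image_sub_le_of_norm_hasDerivWithin_le hlog hbound hx hy
  calc Real.exp (-(L * |y - x|)) * f y = Real.exp (-(L * |y - x|) + Real.log (f y)) := by
        rw [Real.exp_add, Real.exp_log (hpos y hy)]
    _ ≤ Real.exp (Real.log (f x)) := Real.exp_le_exp.2 (by linarith [le_of_abs_le hlip])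
    _ = f x := Real.exp_log (hpos x hx)

lemma exists_sign_mul_le_image_sub_of_le_abs_deriv {c : ℝ} (hs : Convex ℝ s)
    (hf : ∀ z ∈ s, DifferentiableAt ℝ f z) (hc : 0 < c) (hderiv : ∀ z ∈ s, c ≤ |deriv f z|) :
    ∃ σ : ℝ, |σ| = 1 ∧
      ∀ x ∈ s, ∀ t, 0 ≤ t → x + σ * t ∈ s → c * t ≤ f (x + σ * t) - f x := by
  have hcont : ContinuousOn f s := fun z hz ↦ (hf z hz).continuousAt.continuousWithinAt
  have hdiff : DifferentiableOn ℝ f (interior s) := fun z hz ↦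
    (hf z (interior_subset hz)).differentiableWithinAt
  -- Darboux: a nowhere vanishing derivative has constant sign, even if it is discontinuous.
  rcases hasDerivWithinAt_forall_lt_or_forall_gt_of_forall_ne hs (m := 0)
      (fun z hz ↦ (hf z hz).hasDerivAt.hasDerivWithinAt)
      (fun z hz ↦ abs_pos.1 (hc.trans_le (hderiv z hz))) with hneg | hpos
  · refine ⟨-1, by simp, fun x hx t ht hxt ↦ ?_⟩
    have := hs.image_sub_le_mul_sub_of_deriv_le (C := -c) hcont hdiff
      (fun z hz ↦ by
        have hz' := interior_subset hz
        linarith [hderiv z hz', abs_of_neg (hneg z hz')])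
      (x + -1 * t) hxt x hx (by linarith)
    linarith
  · refine ⟨1, by simp, fun x hx t ht hxt ↦ ?_⟩
    have := hs.mul_sub_le_image_sub_of_le_deriv (C := c) hcont hdiff
      (fun z hz ↦ by
        have hz' := interior_subset hz
        linarith [hderiv z hz', abs_of_pos (hpos z hz')])
      x hx (x + 1 * t) hxt (by linarith)
    linarith

end RealFunctions

lemma isPreconnected_subset_of_le_of_tendsto_frontier {X : Type*} [TopologicalSpace X]
    {s t : Set X} {f : X → ℝ} {m : ℝ} (ht : IsPreconnected t) (hs : IsOpen s)
    (hst : (s ∩ t).Nonempty) (hf : ∀ z ∈ frontier s, Tendsto f (𝓝[s] z) (𝓝 0)) (hm : 0 < m)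
    (hle : ∀ z ∈ s ∩ t, m ≤ f z) : t ⊆ s := by
  have hclosed : t ∩ closure (s ∩ t) ⊆ s := by
    rintro z ⟨-, hz⟩
    by_contra hzs
    have hfrontier : z ∈ frontier s :=
      ⟨closure_mono inter_subset_left hz, by rwa [hs.interior_eq]⟩
    have : (𝓝[s ∩ t] z).NeBot := mem_closure_iff_nhdsWithin_neBot.1 hz
    have hlim : Tendsto f (𝓝[s ∩ t] z) (𝓝 0) :=
      (hf z hfrontier).mono_left (nhdsWithin_mono z inter_subset_left)
    exact hm.not_ge (ge_of_tendsto hlim (eventually_mem_nhdsWithin.mono hle))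
  refine (isPreconnected_iff_subset_of_disjoint.1 ht s (closure (s ∩ t))ᶜ hs
    isClosed_closure.isOpen_compl ?_ ?_).resolve_right ?_
  · exact fun z hz ↦ or_iff_not_imp_right.2 fun hz' ↦ hclosed ⟨hz, not_not.1 hz'⟩
  · exact eq_empty_of_forall_notMem fun z hz ↦ hz.2.2 (subset_closure ⟨hz.2.1, hz.1⟩)
  · obtain ⟨z, hz⟩ := hst
    exact fun h ↦ h hz.2 (subset_closure hz)

section WarpingFunction

variable {s I : Set ℝ} {ψ : ℝ → ℝ} {r₀ r x y : ℝ}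

lemma one_sub_abs_sub_div_mul_add_le (hr : 0 < r) (hs : Convex ℝ s)
    (hψ : ∀ z ∈ s, DifferentiableAt ℝ ψ z) (hpos : ∀ z ∈ s, 0 < ψ z)
    (hcurv : ∀ z ∈ s, |1 - deriv ψ z ^ 2| ≤ (ψ z / r) ^ 2) (hx : x ∈ s) (hy : y ∈ s) :
    (1 - |y - x| / r) * (r + ψ y) ≤ r + ψ x := by
  have hderiv : ∀ z ∈ s, |deriv (fun w ↦ r + ψ w) z| ≤ r⁻¹ * (r + ψ z) := fun z hz ↦ by
    have hu : 0 < ψ z / r := div_pos (hpos z hz) hr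
    have hsq : deriv ψ z ^ 2 ≤ (1 + ψ z / r) ^ 2 := by
      nlinarith [(abs_le.1 (hcurv z hz)).1]
    calc |deriv (fun w ↦ r + ψ w) z| = |deriv ψ z| := by rw [deriv_const_add]
      _ ≤ 1 + ψ z / r := abs_le_of_sq_le_sq hsq (by positivity)
      _ = r⁻¹ * (r + ψ z) := by field_simp
  have hexp := exp_neg_mul_abs_sub_mul_le_of_abs_deriv_le_mul hs
    (fun z hz ↦ (hψ z hz).const_add r) (fun z hz ↦ add_pos hr (hpos z hz)) hderiv hx hy
  rw [inv_mul_eq_div] at hexp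
  exact (mul_le_mul_of_nonneg_right (Real.one_sub_le_exp_neg _)
    (add_pos hr (hpos y hy)).le).trans hexp

lemma nine_tenths_mul_add_le (hr : 0 < r) (hs : Convex ℝ s)
    (hψ : ∀ z ∈ s, DifferentiableAt ℝ ψ z) (hpos : ∀ z ∈ s, 0 < ψ z)
    (hcurv : ∀ z ∈ s, |1 - deriv ψ z ^ 2| ≤ (ψ z / r) ^ 2) (hx : x ∈ s) (hy : y ∈ s)
    (hxy : |y - x| ≤ r / 10) : 9 / 10 * (r + ψ y) ≤ r + ψ x := by
  have hdiv : |y - x| / r ≤ 1 / 10 := by rw [div_le_iff₀ hr]; linarith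
  refine le_trans ?_ (one_sub_abs_sub_div_mul_add_le hr hs hψ hpos hcurv hx hy)
  have := hpos y hy
  gcongr
  linarith

lemma one_half_le_abs_deriv (hr : 0 < r) (hpos : 0 < ψ x) (hle : ψ x ≤ r / 2)
    (hcurv : |1 - deriv ψ x ^ 2| ≤ (ψ x / r) ^ 2) : 1 / 2 ≤ |deriv ψ x| := by
  have hu : ψ x / r ≤ 1 / 2 := by rw [div_le_iff₀ hr]; linarith
  have hu0 : 0 < ψ x / r := div_pos hpos hr
  have hsq : (1 / 2) ^ 2 ≤ deriv ψ x ^ 2 := by nlinarith [(abs_le.1 hcurv).2]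
  simpa using sq_le_sq.1 hsq

lemma mem_and_le_of_mem_closedBall (hr : 0 < r) (hI : IsOpen I) (hconv : Convex ℝ I)
    (hpos : ∀ z ∈ I, 0 < ψ z) (hψ : ∀ z ∈ I, DifferentiableAt ℝ ψ z)
    (hend : ∀ z ∈ frontier I, Tendsto ψ (𝓝[I] z) (𝓝 0)) (hr₀ : r₀ ∈ I)
    (hcurv : ∀ z ∈ I ∩ closedBall r₀ (r / 10), |1 - deriv ψ z ^ 2| ≤ (ψ z / r) ^ 2)
    (hlarge : r / 4 ≤ ψ r₀) :
    ∀ z ∈ closedBall r₀ (r / 10), z ∈ I ∧ (r + ψ r₀) / 10 ≤ ψ z := by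
  have hr₀' : r₀ ∈ I ∩ closedBall r₀ (r / 10) := ⟨hr₀, mem_closedBall_self (by positivity)⟩
  have hlower : ∀ z ∈ I ∩ closedBall r₀ (r / 10), (r + ψ r₀) / 10 ≤ ψ z := fun z hz ↦ by
    have := nine_tenths_mul_add_le hr (hconv.inter (convex_closedBall r₀ (r / 10)))
      (fun w hw ↦ hψ w hw.1) (fun w hw ↦ hpos w hw.1) hcurv hz hr₀'
      (by simpa only [mem_closedBall', Real.dist_eq] using hz.2)
    linarith
  have hsub : closedBall r₀ (r / 10) ⊆ I :=
    isPreconnected_subset_of_le_of_tendsto_frontier (convex_closedBall r₀ _).isPreconnected hI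
      ⟨r₀, hr₀'⟩ hend (div_pos (add_pos hr (hpos r₀ hr₀)) (by norm_num)) hlower
  exact fun z hz ↦ ⟨hsub hz, hlower z ⟨hsub hz, hz⟩⟩

lemma exists_sign_mem_and_add_le (hr : 0 < r) (hI : IsOpen I) (hconv : Convex ℝ I)
    (hpos : ∀ z ∈ I, 0 < ψ z) (hψ : ∀ z ∈ I, DifferentiableAt ℝ ψ z)
    (hend : ∀ z ∈ frontier I, Tendsto ψ (𝓝[I] z) (𝓝 0)) (hr₀ : r₀ ∈ I)
    (hcurv : ∀ z ∈ I ∩ closedBall r₀ (r / 10), |1 - deriv ψ z ^ 2| ≤ (ψ z / r) ^ 2)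
    (hsmall : ψ r₀ ≤ r / 4) :
    ∃ σ : ℝ, |σ| = 1 ∧
      ∀ t ∈ Icc 0 (r / 10), r₀ + σ * t ∈ I ∧ ψ r₀ + t / 2 ≤ ψ (r₀ + σ * t) := by
  have hr₀' : r₀ ∈ I ∩ closedBall r₀ (r / 10) := ⟨hr₀, mem_closedBall_self (by positivity)⟩
  have hs : Convex ℝ (I ∩ closedBall r₀ (r / 10)) := hconv.inter (convex_closedBall r₀ _)
  have hderiv : ∀ z ∈ I ∩ closedBall r₀ (r / 10), 1 / 2 ≤ |deriv ψ z| := fun z hz ↦ by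
    have := nine_tenths_mul_add_le hr hs (fun w hw ↦ hψ w hw.1) (fun w hw ↦ hpos w hw.1) hcurv
      hr₀' hz hz.2
    exact one_half_le_abs_deriv hr (hpos z hz.1) (by linarith) (hcurv z hz)
  obtain ⟨σ, hσ, hgrowth⟩ := exists_sign_mul_le_image_sub_of_le_abs_deriv hs
    (fun w hw ↦ hψ w hw.1) one_half_pos hderiv
  have hlower : ∀ t ∈ Icc 0 (r / 10), r₀ + σ * t ∈ I → ψ r₀ + t / 2 ≤ ψ (r₀ + σ * t) := by
    intro t ht hmem
    have hdist : |r₀ + σ * t - r₀| ≤ r / 10 := by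
      rw [add_sub_cancel_left, abs_mul, hσ, one_mul, abs_of_nonneg ht.1]
      exact ht.2
    linarith [hgrowth r₀ hr₀' t ht.1 ⟨hmem, hdist⟩]
  have hsub : (fun t ↦ r₀ + σ * t) '' Icc 0 (r / 10) ⊆ I := by
    refine isPreconnected_subset_of_le_of_tendsto_frontier
      (isPreconnected_Icc.image _ (by fun_prop)) hI
      ⟨r₀, hr₀, 0, ⟨le_rfl, by positivity⟩, by simp⟩ hend (hpos r₀ hr₀) ?_
    rintro _ ⟨hmem, t, ht, rfl⟩
    linarith [hlower t ht hmem, ht.1]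
  exact ⟨σ, hσ, fun t ht ↦
    ⟨hsub (mem_image_of_mem _ ht), hlower t ht (hsub (mem_image_of_mem _ ht))⟩⟩

lemma exists_closedBall_radius_add_le (hr : 0 < r) (hI : IsOpen I) (hconv : Convex ℝ I)
    (hpos : ∀ z ∈ I, 0 < ψ z) (hψ : ∀ z ∈ I, DifferentiableAt ℝ ψ z)
    (hend : ∀ z ∈ frontier I, Tendsto ψ (𝓝[I] z) (𝓝 0)) (hr₀ : r₀ ∈ I)
    (hcurv : ∀ z ∈ I ∩ closedBall r₀ (r / 10), |1 - deriv ψ z ^ 2| ≤ (ψ z / r) ^ 2) :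
    ∃ c, ∀ z ∈ closedBall c (r / 40),
      z ∈ I ∧ |z - r₀| ≤ r / 10 ∧ (r + ψ r₀) / 50 ≤ ψ z := by
  rcases le_total (r / 4) (ψ r₀) with hlarge | hsmall
  · refine ⟨r₀, fun z hz ↦ ?_⟩
    have hz' : z ∈ closedBall r₀ (r / 10) := closedBall_subset_closedBall (by linarith) hz
    obtain ⟨hzI, hle⟩ :=
      mem_and_le_of_mem_closedBall hr hI hconv hpos hψ hend hr₀ hcurv hlarge z hz'
    exact ⟨hzI, hz', by linarith [hpos r₀ hr₀]⟩
  · obtain ⟨σ, hσ, hgrowth⟩ :=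
      exists_sign_mem_and_add_le hr hI hconv hpos hψ hend hr₀ hcurv hsmall
    have hσσ : σ * σ = 1 := by rw [← abs_mul_abs_self, hσ, one_mul]
    refine ⟨r₀ + σ * (3 * r / 40), fun z hz ↦ ?_⟩
    have hz_eq : r₀ + σ * (σ * (z - r₀)) = z := by linear_combination (z - r₀) * hσσ
    have ht : |σ * (z - r₀) - 3 * r / 40| ≤ r / 40 := by
      calc |σ * (z - r₀) - 3 * r / 40| = |σ * (z - (r₀ + σ * (3 * r / 40)))| := by
            congr 1
            linear_combination (3 * r / 40) * hσσ
        _ ≤ r / 40 := by rwa [abs_mul, hσ, one_mul]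
    obtain ⟨ht_lower, ht_upper⟩ := abs_le.1 ht
    obtain ⟨hzI, hle⟩ := hgrowth (σ * (z - r₀)) ⟨by linarith, by linarith⟩
    rw [hz_eq] at hzI hle
    refine ⟨hzI, ?_, by linarith [hpos r₀ hr₀]⟩
    rw [← one_mul |z - r₀|, ← hσ, ← abs_mul, abs_of_nonneg (by linarith)]
    linarith

end WarpingFunction

section UnitVectors

variable {V : Type*} [NormedAddCommGroup V] [NormedSpace ℝ V]

lemma norm_normalize_sub_normalize_le (x : V) {y : V} (hy : y ≠ 0) :
    ‖NormedSpace.normalize x - NormedSpace.normalize y‖ ≤ 2 * ‖x - y‖ / ‖y‖ := by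
  have hdecomp : NormedSpace.normalize x - NormedSpace.normalize y =
      ‖y‖⁻¹ • ((x - y) + (‖y‖ - ‖x‖) • NormedSpace.normalize x) := by
    rw [sub_smul, NormedSpace.norm_smul_normalize, sub_add_sub_comm, add_comm x,
      add_sub_add_right_eq_sub, smul_sub, inv_smul_smul₀ (norm_ne_zero_iff.2 hy)]
    rfl
  have hnorm : ‖NormedSpace.normalize x‖ ≤ 1 := by
    rcases eq_or_ne x 0 with rfl | hx
    · simp
    · exact (NormedSpace.norm_normalize hx).le
  calc ‖NormedSpace.normalize x - NormedSpace.normalize y‖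
      = ‖(x - y) + (‖y‖ - ‖x‖) • NormedSpace.normalize x‖ / ‖y‖ := by
        rw [hdecomp, norm_smul, norm_inv, norm_norm, inv_mul_eq_div]
    _ ≤ (‖x - y‖ + ‖x - y‖ * 1) / ‖y‖ := by
        gcongr
        refine (norm_add_le _ _).trans ?_
        rw [norm_smul, Real.norm_eq_abs]
        gcongr
        rw [norm_sub_rev]
        exact abs_norm_sub_norm_le y x
    _ = 2 * ‖x - y‖ / ‖y‖ := by ring

lemma one_half_le_norm_lineMap {v w : V} (hv : ‖v‖ = 1) (hvw : ‖w - v‖ ≤ 1 / 2) {t : ℝ}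
    (ht : t ∈ Icc (0 : ℝ) 1) : 1 / 2 ≤ ‖AffineMap.lineMap v w t‖ := by
  have hdist : ‖AffineMap.lineMap v w t - v‖ ≤ 1 / 2 := by
    rw [← dist_eq_norm, dist_lineMap_left, dist_eq_norm, Real.norm_of_nonneg ht.1, norm_sub_rev]
    nlinarith [ht.1, ht.2, norm_nonneg (w - v)]
  linarith [norm_sub_norm_le v (AffineMap.lineMap v w t),
    norm_sub_rev v (AffineMap.lineMap v w t)]

lemma lineMap_ne_zero_of_norm_eq_one {v w : V} (hv : ‖v‖ = 1) (hw : ‖w‖ = 1)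
    (hvw : ‖w - v‖ ≤ 1 / 2) (t : ℝ) : AffineMap.lineMap v w t ≠ 0 := by
  intro hzero
  have hsmul : (1 - t) • v = (-t) • w := by
    rw [AffineMap.lineMap_apply_module] at hzero
    rw [neg_smul]
    exact eq_neg_of_add_eq_zero_left hzero
  have habs : |1 - t| = |-t| := by simpa [norm_smul, hv, hw] using congrArg norm hsmul
  have ht : t = 1 / 2 := by
    rcases abs_eq_abs.1 habs with h | h <;> linarith
  have := one_half_le_norm_lineMap hv hvw (t := t) (by rw [ht]; constructor <;> norm_num)
  rw [hzero, norm_zero] at this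
  norm_num at this

end UnitVectors

section SphericalCap

variable {E : Type*} [NormedAddCommGroup E] [InnerProductSpace ℝ E]

lemma norm_sub_repr_zero_smul_le {n : ℕ} (b : OrthonormalBasis (Fin (n + 1)) ℝ E) {x : E} {δ : ℝ}
    (hx : ∀ i : Fin n, |b.repr x i.succ| ≤ δ) : ‖x - b.repr x 0 • b 0‖ ≤ n * δ := by
  have hsum : x - b.repr x 0 • b 0 = ∑ i : Fin n, b.repr x i.succ • b i.succ := by
    rw [sub_eq_iff_eq_add', ← Fin.sum_univ_succ (fun i ↦ b.repr x i • b i), b.sum_repr]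
  calc ‖x - b.repr x 0 • b 0‖ ≤ ∑ _i : Fin n, δ := by
        rw [hsum]
        refine norm_sum_le_of_le _ fun i _ ↦ ?_
        rw [norm_smul, b.norm_eq_one, mul_one]
        exact hx i
    _ = n * δ := by simp

lemma mem_Ioo_smul_image_ball {θ : sphere (0 : E) 1} {x : E} {s ε η : ℝ} (hs : 0 < s)
    (hx : ‖x - s • (θ : E)‖ ≤ ε) (hεs : ε < s) (hεη : 2 * ε < η * s) (hone : s + ε < 1) :
    x ∈ Ioo (0 : ℝ) 1 • ((↑) '' ball θ η : Set E) := by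
  have hθ : ‖(θ : E)‖ = 1 := norm_eq_of_mem_sphere θ
  have hsθ : ‖s • (θ : E)‖ = s := by rw [norm_smul, hθ, mul_one, Real.norm_of_nonneg hs.le]
  have hnorm : |‖x‖ - s| ≤ ε := by
    simpa only [hsθ] using (abs_norm_sub_norm_le x (s • (θ : E))).trans hx
  have hx_pos : 0 < ‖x‖ := by linarith [(abs_le.1 hnorm).1]
  have hclose : ‖NormedSpace.normalize x - θ‖ < η :=
    calc ‖NormedSpace.normalize x - θ‖
        = ‖NormedSpace.normalize x - NormedSpace.normalize (s • (θ : E))‖ := by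
          rw [NormedSpace.normalize_smul_of_pos hs,
            NormedSpace.normalize_eq_self_of_norm_eq_one hθ]
      _ ≤ 2 * ‖x - s • (θ : E)‖ / s := by
          simpa only [hsθ] using norm_normalize_sub_normalize_le x
            (smul_ne_zero hs.ne' (ne_zero_of_mem_unit_sphere θ))
      _ < η := by rw [div_lt_iff₀ hs]; linarith
  have hsphere : NormedSpace.normalize x ∈ sphere (0 : E) 1 :=
    mem_sphere_zero_iff_norm.2 (NormedSpace.norm_normalize (norm_pos_iff.1 hx_pos))
  refine mem_smul.2 ⟨‖x‖, ⟨hx_pos, by linarith [(abs_le.1 hnorm).2]⟩, NormedSpace.normalize x,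
    ⟨⟨NormedSpace.normalize x, hsphere⟩, ?_, rfl⟩, NormedSpace.norm_smul_normalize x⟩
  rwa [mem_ball, Subtype.dist_eq, dist_eq_norm]

variable [FiniteDimensional ℝ E]

lemma exists_orthonormalBasis_zero_eq {n : ℕ} (hE : Module.finrank ℝ E = n + 1)
    {v : E} (hv : ‖v‖ = 1) : ∃ b : OrthonormalBasis (Fin (n + 1)) ℝ E, b 0 = v := by
  obtain ⟨b, hb⟩ := Orthonormal.exists_orthonormalBasis_extension_of_card_eq (𝕜 := ℝ)
    (ι := Fin (n + 1)) (by simpa using hE) (v := fun _ ↦ v) (s := {0})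
    ⟨fun _ ↦ hv, fun i j hij ↦ absurd (Subsingleton.elim i j) hij⟩
  exact ⟨b, hb 0 rfl⟩

variable [MeasurableSpace E] [BorelSpace E]

lemma volume_setOf_forall_repr_mem {ι : Type*} [Fintype ι] (b : OrthonormalBasis ι ℝ E)
    {s : ι → Set ℝ} (hs : ∀ i, MeasurableSet (s i)) :
    volume {x : E | ∀ i, b.repr x i ∈ s i} = ∏ i, volume (s i) := by
  have hpre : {x : E | ∀ i, b.repr x i ∈ s i} = (WithLp.ofLp ∘ b.repr) ⁻¹' univ.pi s := by
    ext x
    simp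
  rw [hpre, ((PiLp.volume_preserving_ofLp ι).comp b.measurePreserving_repr).measure_preimage
    (MeasurableSet.univ_pi hs).nullMeasurableSet, volume_pi_pi]

lemma exists_pos_mul_pow_le_toSphere_ball {n : ℕ} (hE : Module.finrank ℝ E = n + 1) :
    ∃ c : ℝ, 0 < c ∧ ∀ (θ : sphere (0 : E) 1) (η : ℝ), 0 < η → η ≤ 1 →
      ENNReal.ofReal (c * η ^ n) ≤ (volume : Measure E).toSphere (ball θ η) := by
  refine ⟨1 / 4 * (1 / (4 * (n + 1))) ^ n, by positivity, fun θ η hη hη1 ↦ ?_⟩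
  obtain ⟨b, hb⟩ := exists_orthonormalBasis_zero_eq hE (norm_eq_of_mem_sphere θ)
  set δ : ℝ := η / (8 * (n + 1)) with hδ
  have hnδ : n * δ < η / 8 := by
    rw [hδ, mul_div_assoc', div_lt_div_iff₀ (by positivity) (by norm_num)]
    linarith
  -- A box of size `δ` in the directions orthogonal to `θ` lies in the cone over the cap.
  set s : Fin (n + 1) → Set ℝ := Fin.cons (Ioo (1 / 4) (1 / 2)) fun _ ↦ Ioo (-δ) δ with hs
  have hs_meas : ∀ i, MeasurableSet (s i) := Fin.cases measurableSet_Ioo fun _ ↦ measurableSet_Ioo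
  have hbox : {x : E | ∀ i, b.repr x i ∈ s i} ⊆ Ioo (0 : ℝ) 1 • ((↑) '' ball θ η : Set E) := by
    intro x hx
    have hx0 : b.repr x 0 ∈ Ioo (1 / 4) (1 / 2) := hx 0
    have hxθ : ‖x - b.repr x 0 • (θ : E)‖ ≤ n * δ := hb ▸
      norm_sub_repr_zero_smul_le b fun i ↦ abs_le.2 ⟨(hx i.succ).1.le, (hx i.succ).2.le⟩
    exact mem_Ioo_smul_image_ball (by linarith [hx0.1]) hxθ (by linarith [hx0.1])
      (by nlinarith [hx0.1]) (by linarith [hx0.2])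
  calc ENNReal.ofReal (1 / 4 * (1 / (4 * (n + 1))) ^ n * η ^ n)
      = ENNReal.ofReal (1 / 4 * (2 * δ) ^ n) := by
        rw [mul_assoc, ← mul_pow, hδ]
        congr 3
        field_simp
        norm_num
    _ = volume {x : E | ∀ i, b.repr x i ∈ s i} := by
        rw [volume_setOf_forall_repr_mem b hs_meas, Fin.prod_univ_succ,
          ENNReal.ofReal_mul (by norm_num), ENNReal.ofReal_pow (by positivity)]
        simp only [hs, Fin.cons_zero, Fin.cons_succ, Real.volume_Ioo, Finset.prod_const,
          Finset.card_univ, Fintype.card_fin]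
        congr 2 <;> ring_nf
    _ ≤ volume (Ioo (0 : ℝ) 1 • ((↑) '' ball θ η : Set E)) := measure_mono hbox
    _ ≤ (volume : Measure E).toSphere (ball θ η) := by
        rw [Measure.toSphere_apply' _ measurableSet_ball, hE]
        exact le_mul_of_one_le_left (by positivity) (by simp)

end SphericalCap

section WarpedProduct

variable {E : Type*} [NormedAddCommGroup E] [InnerProductSpace ℝ E]

/-- The length of the path `γ : [0, 1] → ℝ × E` for the warped product metric
`dr² + ψ(r)² g`, where `g` is the round metric of the unit sphere of `E`. Paths in the sphere
are encoded as paths in the ambient space `E`. -/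
noncomputable def warpedLength (ψ : ℝ → ℝ) (γ : ℝ → ℝ × E) : ℝ :=
  ∫ t in (0 : ℝ)..1, √((deriv (fun u ↦ (γ u).1) t) ^ 2 +
    (ψ ((γ t).1)) ^ 2 * ‖deriv (fun u ↦ (γ u).2) t‖ ^ 2)

/-- The distance of the warped product metric `dr² + ψ(r)² g` on `I × S`, where `S` is the unit
sphere of `E`: the infimum of the lengths of the `C¹` paths joining two points. By the convention
for `sInf ∅` it is `0` for points that no such path joins. -/
noncomputable def warpedDist (I : Set ℝ) (ψ : ℝ → ℝ) (p q : ℝ × E) : ℝ :=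
  sInf {ℓ | ∃ γ : ℝ → ℝ × E, ContDiff ℝ 1 γ ∧ γ 0 = p ∧ γ 1 = q ∧
    (∀ t ∈ Icc (0 : ℝ) 1, (γ t).1 ∈ I ∧ ‖(γ t).2‖ = 1) ∧ ℓ = warpedLength ψ γ}

/-- The geodesic ball of radius `r` about `p` for the warped product metric `dr² + ψ(r)² g` on
`I × S`, where `S` is the unit sphere of `E`. -/
def warpedBall (I : Set ℝ) (ψ : ℝ → ℝ) (p : ℝ × sphere (0 : E) 1) (r : ℝ) :
    Set (ℝ × sphere (0 : E) 1) :=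
  {q | q.1 ∈ I ∧ warpedDist I ψ (p.1, (p.2 : E)) (q.1, (q.2 : E)) < r}

lemma warpedLength_nonneg (ψ : ℝ → ℝ) (γ : ℝ → ℝ × E) : 0 ≤ warpedLength ψ γ :=
  intervalIntegral.integral_nonneg zero_le_one fun _ _ ↦ Real.sqrt_nonneg _

lemma warpedLength_le {ψ : ℝ → ℝ} {γ : ℝ → ℝ × E} {A B : ℝ}
    (hA : ∀ t ∈ Icc (0 : ℝ) 1, |deriv (fun u ↦ (γ u).1) t| ≤ A)
    (hB : ∀ t ∈ Icc (0 : ℝ) 1, |ψ (γ t).1| * ‖deriv (fun u ↦ (γ u).2) t‖ ≤ B) :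
    warpedLength ψ γ ≤ A + B := by
  have hspeed : ∀ t ∈ uIoc (0 : ℝ) 1, ‖√((deriv (fun u ↦ (γ u).1) t) ^ 2 +
      (ψ ((γ t).1)) ^ 2 * ‖deriv (fun u ↦ (γ u).2) t‖ ^ 2)‖ ≤ A + B := by
    intro t ht
    rw [uIoc_of_le zero_le_one] at ht
    have hA' := hA t (Ioc_subset_Icc_self ht)
    have hB' := hB t (Ioc_subset_Icc_self ht)
    have hA0 := abs_nonneg (deriv (fun u ↦ (γ u).1) t)
    have hB0 : 0 ≤ |ψ (γ t).1| * ‖deriv (fun u ↦ (γ u).2) t‖ := by positivity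
    rw [Real.norm_of_nonneg (Real.sqrt_nonneg _), Real.sqrt_le_iff, ← mul_pow, ← sq_abs,
      ← sq_abs (ψ _ * _), abs_mul, abs_norm]
    exact ⟨by linarith, by nlinarith⟩
  simpa [warpedLength] using
    (le_abs_self _).trans (intervalIntegral.norm_integral_le_of_norm_le_const hspeed)

lemma warpedDist_le_warpedLength {I : Set ℝ} {ψ : ℝ → ℝ} {γ : ℝ → ℝ × E} (hγ : ContDiff ℝ 1 γ)
    (hmem : ∀ t ∈ Icc (0 : ℝ) 1, (γ t).1 ∈ I ∧ ‖(γ t).2‖ = 1) :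
    warpedDist I ψ (γ 0) (γ 1) ≤ warpedLength ψ γ := by
  refine csInf_le ⟨0, ?_⟩ ⟨γ, hγ, rfl, rfl, hmem, rfl⟩
  rintro _ ⟨γ', -, -, -, -, rfl⟩
  exact warpedLength_nonneg ψ γ'

lemma exists_contDiff_path_norm_eq_one {v w : E} (hv : ‖v‖ = 1) (hw : ‖w‖ = 1)
    (hvw : ‖w - v‖ ≤ 1 / 2) :
    ∃ c : ℝ → E, ContDiff ℝ 1 c ∧ c 0 = v ∧ c 1 = w ∧ (∀ t, ‖c t‖ = 1) ∧
      ∀ t ∈ Icc (0 : ℝ) 1, ‖deriv c t‖ ≤ 4 * ‖w - v‖ := by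
  have hne := lineMap_ne_zero_of_norm_eq_one hv hw hvw
  have hchord : ContDiff ℝ 1 fun t : ℝ ↦ AffineMap.lineMap v w t := by
    simp only [AffineMap.lineMap_apply_module]
    fun_prop
  refine ⟨fun t ↦ NormedSpace.normalize (AffineMap.lineMap v w t),
    ((hchord.norm ℝ hne).inv fun t ↦ norm_ne_zero_iff.2 (hne t)).smul hchord,
    by simp [NormedSpace.normalize, hv], by simp [NormedSpace.normalize, hw],
    fun t ↦ NormedSpace.norm_normalize (hne t), fun t ht ↦ ?_⟩
  refine norm_deriv_le_of_lip' (by positivity) (Eventually.of_forall fun u ↦ ?_)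
  calc _ ≤ 2 * ‖AffineMap.lineMap v w u - AffineMap.lineMap v w t‖ /
          ‖AffineMap.lineMap v w t‖ := norm_normalize_sub_normalize_le _ (hne t)
    _ = 2 * (‖u - t‖ * ‖w - v‖) / ‖AffineMap.lineMap v w t‖ := by
        rw [← dist_eq_norm, dist_lineMap_lineMap, dist_eq_norm, dist_comm, dist_eq_norm]
    _ ≤ 2 * (‖u - t‖ * ‖w - v‖) / (1 / 2) := by
        gcongr
        exact one_half_le_norm_lineMap hv hvw ht
    _ = 4 * ‖w - v‖ * ‖u - t‖ := by ring

lemma warpedDist_le {I : Set ℝ} {ψ : ℝ → ℝ} {x y M : ℝ} (hI : uIcc x y ⊆ I)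
    (hM : ∀ z ∈ uIcc x y, |ψ z| ≤ M) {v w : E} (hv : ‖v‖ = 1) (hw : ‖w‖ = 1)
    (hvw : ‖w - v‖ ≤ 1 / 2) :
    warpedDist I ψ (x, v) (y, w) ≤ |y - x| + M * (4 * ‖w - v‖) := by
  obtain ⟨c, hc, rfl, rfl, hnorm, hspeed⟩ := exists_contDiff_path_norm_eq_one hv hw hvw
  set γ : ℝ → ℝ × E := fun t ↦ (x + t * (y - x), c t) with hγ
  have hradial : ∀ t ∈ Icc (0 : ℝ) 1, x + t * (y - x) ∈ uIcc x y := fun t ht ↦ by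
    rw [← segment_eq_uIcc, segment_eq_image']
    exact mem_image_of_mem _ ht
  have hends : (x, c 0) = γ 0 ∧ (y, c 1) = γ 1 := by simp [hγ]
  rw [hends.1, hends.2]
  refine (warpedDist_le_warpedLength (by fun_prop) fun t ht ↦
    ⟨hI (hradial t ht), hnorm t⟩).trans (warpedLength_le ?_ ?_)
  · intro t _
    simp [hγ]
  · intro t ht
    exact mul_le_mul (hM _ (hradial t ht)) (hspeed t ht) (norm_nonneg _)
      ((abs_nonneg _).trans (hM _ left_mem_uIcc))

lemma mem_warpedBall {I : Set ℝ} {ψ : ℝ → ℝ} {x y M r : ℝ} {θ φ : sphere (0 : E) 1}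
    (hI : uIcc x y ⊆ I) (hM : ∀ z ∈ uIcc x y, |ψ z| ≤ M) (hθφ : dist φ θ ≤ 1 / 2)
    (hlt : |y - x| + M * (4 * dist φ θ) < r) : (y, φ) ∈ warpedBall I ψ (x, θ) r := by
  rw [Subtype.dist_eq, dist_eq_norm] at hθφ hlt
  exact ⟨hI right_mem_uIcc, (warpedDist_le hI hM (norm_eq_of_mem_sphere θ)
    (norm_eq_of_mem_sphere φ) hθφ).trans_lt hlt⟩

variable [FiniteDimensional ℝ E] [MeasurableSpace E] [BorelSpace E]

/-- The Riemannian volume `ψ(r)ⁿ dr dθ` of the warped product metric `dr² + ψ(r)² g` in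
coordinates `(r, θ)`, for spheres of dimension `n`. -/
noncomputable def warpedVolume (n : ℕ) (ψ : ℝ → ℝ) : Measure (ℝ × sphere (0 : E) 1) :=
  (volume.prod (volume : Measure E).toSphere).withDensity fun p ↦ ENNReal.ofReal (ψ p.1 ^ n)

lemma mul_le_warpedVolume_prod {n : ℕ} {ψ : ℝ → ℝ} {m : ℝ} {A : Set ℝ}
    {C : Set (sphere (0 : E) 1)}
    (hA : MeasurableSet A) (hC : MeasurableSet C) (hm : 0 ≤ m) (hψ : ∀ x ∈ A, m ≤ ψ x) :
    ENNReal.ofReal (m ^ n) * (volume A * (volume : Measure E).toSphere C) ≤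
      warpedVolume n ψ (A ×ˢ C) := by
  rw [warpedVolume, withDensity_apply' _ _, ← Measure.prod_prod, ← setLIntegral_const]
  refine setLIntegral_mono' (hA.prod hC) fun p hp ↦ ?_
  gcongr
  exact hψ p.1 hp.1

lemma exists_pos_mul_pow_le_warpedVolume_prod_ball {n : ℕ} (hE : Module.finrank ℝ E = n + 1) :
    ∃ κ : ℝ, 0 < κ ∧ ∀ (ψ : ℝ → ℝ) (A : Set ℝ) (θ : sphere (0 : E) 1) (m η : ℝ),
      MeasurableSet A → 0 ≤ m → (∀ x ∈ A, m ≤ ψ x) → 0 < η → η ≤ 1 →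
        ENNReal.ofReal (κ * (m * η) ^ n) * volume A ≤ warpedVolume n ψ (A ×ˢ ball θ η) := by
  obtain ⟨κ, hκ, hcap⟩ := exists_pos_mul_pow_le_toSphere_ball hE
  refine ⟨κ, hκ, fun ψ A θ m η hA hm hψ hη hη1 ↦ ?_⟩
  calc ENNReal.ofReal (κ * (m * η) ^ n) * volume A
      = ENNReal.ofReal (m ^ n) * (volume A * ENNReal.ofReal (κ * η ^ n)) := by
        rw [show κ * (m * η) ^ n = m ^ n * (κ * η ^ n) by ring,
          ENNReal.ofReal_mul (by positivity)]
        ring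
    _ ≤ ENNReal.ofReal (m ^ n) * (volume A * (volume : Measure E).toSphere (ball θ η)) := by
        gcongr
        exact hcap θ η hη hη1
    _ ≤ warpedVolume n ψ (A ×ˢ ball θ η) :=
        mul_le_warpedVolume_prod hA measurableSet_ball hm hψ

end WarpedProduct

section Noncollapsing

variable {E : Type*} [NormedAddCommGroup E] [InnerProductSpace ℝ E]

lemma prod_ball_subset_warpedBall {I A : Set ℝ} {ψ : ℝ → ℝ} {r₀ r : ℝ} (hr : 0 < r)
    (hconv : Convex ℝ I) (hpos : ∀ z ∈ I, 0 < ψ z) (hψ : ∀ z ∈ I, DifferentiableAt ℝ ψ z)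
    (hr₀ : r₀ ∈ I)
    (hcurv : ∀ z ∈ I ∩ closedBall r₀ (r / 10), |1 - deriv ψ z ^ 2| ≤ (ψ z / r) ^ 2)
    (hA : A ⊆ I ∩ closedBall r₀ (r / 10)) (θ : sphere (0 : E) 1) :
    A ×ˢ ball θ (r / (16 * (r + ψ r₀))) ⊆ warpedBall I ψ (r₀, θ) r := by
  have hr₀' : r₀ ∈ I ∩ closedBall r₀ (r / 10) := ⟨hr₀, mem_closedBall_self (by positivity)⟩
  have hs : Convex ℝ (I ∩ closedBall r₀ (r / 10)) := hconv.inter (convex_closedBall r₀ _)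
  have hpos₀ : 0 < ψ r₀ := hpos r₀ hr₀
  rintro ⟨x, φ⟩ ⟨hx, hφ : dist φ θ < r / (16 * (r + ψ r₀))⟩
  have hsub : uIcc r₀ x ⊆ I ∩ closedBall r₀ (r / 10) :=
    hs.ordConnected.uIcc_subset hr₀' (hA hx)
  have hupper : ∀ z ∈ uIcc r₀ x, |ψ z| ≤ 2 * (r + ψ r₀) := fun z hz ↦ by
    have := nine_tenths_mul_add_le hr hs (fun w hw ↦ hψ w hw.1) (fun w hw ↦ hpos w hw.1) hcurv
      hr₀' (hsub hz) (hsub hz).2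
    rw [abs_of_pos (hpos z (hsub hz).1)]
    linarith
  rw [lt_div_iff₀ (by positivity)] at hφ
  have hx_dist : |x - r₀| ≤ r / 10 := (hA hx).2
  refine mem_warpedBall (hsub.trans inter_subset_left) hupper ?_ (by linarith)
  have : 0 ≤ dist φ θ * ψ r₀ := by positivity
  nlinarith

variable [FiniteDimensional ℝ E] [MeasurableSpace E] [BorelSpace E]

theorem stmt15_general {n : ℕ} (hE : Module.finrank ℝ E = n + 1) :
    ∃ κ : ℝ, 0 < κ ∧ ∀ (I : Set ℝ) (ψ : ℝ → ℝ), IsOpen I → I.OrdConnected →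
      (∀ x ∈ I, 0 < ψ x) → DifferentiableOn ℝ ψ I →
      (∀ x ∈ frontier I, Tendsto ψ (𝓝[I] x) (𝓝 0)) →
      ∀ r₀ r : ℝ, 0 < r → r₀ ∈ I →
      (∀ x ∈ I, |x - r₀| < r → |1 - deriv ψ x ^ 2| / ψ x ^ 2 ≤ r⁻¹ ^ 2) →
      ∀ θ₀ : sphere (0 : E) 1,
        ENNReal.ofReal (κ * r ^ (n + 1)) ≤ warpedVolume n ψ (warpedBall I ψ (r₀, θ₀) r) := by
  obtain ⟨κ, hκ, hprod⟩ := exists_pos_mul_pow_le_warpedVolume_prod_ball hE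
  refine ⟨κ * (1 / 800) ^ n / 20, by positivity, ?_⟩
  intro I ψ hI hconn hpos hψ hend r₀ r hr hr₀ hcurv θ₀
  have hdiff : ∀ z ∈ I, DifferentiableAt ℝ ψ z := fun z hz ↦
    hψ.differentiableAt (hI.mem_nhds hz)
  have hcurv' : ∀ z ∈ I ∩ closedBall r₀ (r / 10), |1 - deriv ψ z ^ 2| ≤ (ψ z / r) ^ 2 := by
    rintro z ⟨hzI, hz⟩
    have hz_dist : |z - r₀| < r := lt_of_le_of_lt hz (by linarith)
    rw [div_eq_mul_inv, mul_pow, mul_comm, ← div_le_iff₀ (pow_pos (hpos z hzI) 2)]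
    exact hcurv z hzI hz_dist
  obtain ⟨c, hc⟩ :=
    exists_closedBall_radius_add_le hr hI hconn.convex hpos hdiff hend hr₀ hcurv'
  have hN : 0 < r + ψ r₀ := add_pos hr (hpos r₀ hr₀)
  have hη : r / (16 * (r + ψ r₀)) ≤ 1 := by
    rw [div_le_one (by positivity)]
    linarith [hpos r₀ hr₀]
  calc ENNReal.ofReal (κ * (1 / 800) ^ n / 20 * r ^ (n + 1))
      = ENNReal.ofReal (κ * ((r + ψ r₀) / 50 * (r / (16 * (r + ψ r₀)))) ^ n) *
          volume (closedBall c (r / 40)) := by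
        rw [show (r + ψ r₀) / 50 * (r / (16 * (r + ψ r₀))) = r / 800 by field_simp; norm_num,
          Real.volume_closedBall, ← ENNReal.ofReal_mul (by positivity)]
        congr 1
        ring
    _ ≤ warpedVolume n ψ (closedBall c (r / 40) ×ˢ ball θ₀ (r / (16 * (r + ψ r₀)))) :=
        hprod ψ _ θ₀ _ _ measurableSet_closedBall (by positivity) (fun z hz ↦ (hc z hz).2.2)
          (by positivity) hη
    _ ≤ warpedVolume n ψ (warpedBall I ψ (r₀, θ₀) r) :=
        measure_mono (prod_ball_subset_warpedBall hr hconn.convex hpos hdiff hr₀ hcurv'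
          (fun z hz ↦ ⟨(hc z hz).1, (hc z hz).2.1⟩) θ₀)

end Noncollapsing

lemma tendsto_of_mem_frontier_preimage_coe_Ioo {X : Type*} {l : Filter X} {a b : EReal} {f : ℝ → X}
    (ha : ∀ a' : ℝ, a = a' → Tendsto f (𝓝[>] a') l)
    (hb : ∀ b' : ℝ, b = b' → Tendsto f (𝓝[<] b') l) {x : ℝ}
    (hx : x ∈ frontier (Real.toEReal ⁻¹' Ioo a b)) :
    Tendsto f (𝓝[Real.toEReal ⁻¹' Ioo a b] x) l := by
  rw [(isOpen_Ioo.preimage continuous_coe_real_ereal).frontier_eq] at hx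
  have hclosed : IsClosed (Real.toEReal ⁻¹' Icc a b) :=
    isClosed_Icc.preimage continuous_coe_real_ereal
  obtain ⟨hax, hxb⟩ : (x : EReal) ∈ Icc a b :=
    closure_minimal (preimage_mono Ioo_subset_Icc_self) hclosed hx.1
  rcases hax.eq_or_lt with rfl | hax'
  · exact (ha x rfl).mono_left (nhdsWithin_mono x fun y hy ↦ EReal.coe_lt_coe_iff.1 hy.1)
  · obtain rfl : x = b := hxb.eq_or_lt.resolve_right fun hxb' ↦ hx.2 ⟨hax', hxb'⟩
    exact (hb x rfl).mono_left (nhdsWithin_mono x fun y hy ↦ EReal.coe_lt_coe_iff.1 hy.2)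

/-- Uniform `κ(n)`-noncollapsing for complete rotationally symmetric manifolds not
diffeomorphic to `S¹ × Sⁿ`. Such a manifold is presented in warped-product coordinates:
a (possibly infinite) interval `(a,b)`, a smooth positive warping function `ψ`, with the
metric `dr² + ψ²(r)g_{Sⁿ}`, closing up smoothly (`ψ → 0`, `ψ' → ±1`) at any finite end
(this covers `ℝ^{n+1}`, `S^{n+1}` and `ℝ × Sⁿ`, and excludes `S¹ × Sⁿ`).
If `|Rm| ≤ r⁻²` on the geodesic ball `B(x₀,r)` — expressed by the curvature bounds
`|1−(ψ')²|/ψ² ≤ r⁻²` and `|ψ''|/ψ ≤ r⁻²` on all slices meeting the ball — then the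
Riemannian volume of `B(x₀,r)` (the warped-product measure `ψ(r)ⁿ dr dθ` of the set of
points at warped-product path distance `< r` from `x₀`) is at least `κ rⁿ⁺¹`. -/
theorem stmt15 (n : ℕ) (hn : 2 ≤ n) :
    ∃ κ : ℝ, 0 < κ ∧
    ∀ (a b : EReal) (ψ : ℝ → ℝ),
      a < b →
      (∀ x : ℝ, a < (x : EReal) → (x : EReal) < b → 0 < ψ x) →
      ContDiffOn ℝ (⊤ : ℕ∞) ψ {x : ℝ | a < (x : EReal) ∧ (x : EReal) < b} →
      (∀ a' : ℝ, a = (a' : EReal) →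
        Tendsto ψ (nhdsWithin a' (Ioi a')) (nhds 0) ∧
        Tendsto (deriv ψ) (nhdsWithin a' (Ioi a')) (nhds 1)) →
      (∀ b' : ℝ, b = (b' : EReal) →
        Tendsto ψ (nhdsWithin b' (Iio b')) (nhds 0) ∧
        Tendsto (deriv ψ) (nhdsWithin b' (Iio b')) (nhds (-1))) →
      ∀ r₀ r : ℝ, 0 < r → a < (r₀ : EReal) → (r₀ : EReal) < b →
      (∀ x : ℝ, a < (x : EReal) → (x : EReal) < b → |x - r₀| < r →
        |1 - (deriv ψ x) ^ 2| / (ψ x) ^ 2 ≤ (r⁻¹) ^ 2 ∧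
        |deriv (deriv ψ) x| / ψ x ≤ (r⁻¹) ^ 2) →
      ∀ θ₀ : sphere (0 : EuclideanSpace ℝ (Fin (n + 1))) 1,
      ENNReal.ofReal (κ * r ^ (n + 1)) ≤
        ∫⁻ p in {p : ℝ × sphere (0 : EuclideanSpace ℝ (Fin (n + 1))) 1 |
            a < (p.1 : EReal) ∧ (p.1 : EReal) < b ∧
            sInf {ℓ : ℝ | ∃ γ : ℝ → ℝ × EuclideanSpace ℝ (Fin (n + 1)),
                ContDiff ℝ 1 γ ∧
                γ 0 = (r₀, (θ₀ : EuclideanSpace ℝ (Fin (n + 1)))) ∧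
                γ 1 = (p.1, (p.2 : EuclideanSpace ℝ (Fin (n + 1)))) ∧
                (∀ t ∈ Icc (0 : ℝ) 1,
                  a < (((γ t).1 : ℝ) : EReal) ∧ (((γ t).1 : ℝ) : EReal) < b ∧
                    ‖(γ t).2‖ = 1) ∧
                ℓ = ∫ t in (0 : ℝ)..1,
                    Real.sqrt ((deriv (fun u => (γ u).1) t) ^ 2 +
                      (ψ ((γ t).1)) ^ 2 * ‖deriv (fun u => (γ u).2) t‖ ^ 2)} < r},
          ENNReal.ofReal ((ψ p.1) ^ n)
          ∂((volume : Measure ℝ).prod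
              ((volume : Measure (EuclideanSpace ℝ (Fin (n + 1)))).toSphere)) := by
  obtain ⟨κ, hκ, hvol⟩ :=
    stmt15_general (E := EuclideanSpace ℝ (Fin (n + 1))) finrank_euclideanSpace_fin
  refine ⟨κ, hκ, fun a b ψ _ hpos hψ ha hb r₀ r hr har hrb hcurv θ₀ ↦ ?_⟩
  simpa only [warpedVolume, withDensity_apply', warpedBall, warpedDist, warpedLength, mem_preimage,
    mem_Ioo, and_assoc] using hvol (Real.toEReal ⁻¹' Ioo a b) ψ
      (isOpen_Ioo.preimage continuous_coe_real_ereal)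
      (ordConnected_Ioo.preimage_mono EReal.coe_strictMono.monotone)
      (fun x hx ↦ hpos x hx.1 hx.2) (hψ.differentiableOn (by simp))
      (fun _ ↦ tendsto_of_mem_frontier_preimage_coe_Ioo (fun a' h ↦ (ha a' h).1)
        fun b' h ↦ (hb b' h).1)
      r₀ r hr ⟨har, hrb⟩ (fun x hx hxr ↦ (hcurv x hx.1 hx.2 hxr).1) θ₀
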